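/- Let P ≥ N, let f : ℝ^P → ℝ^N be a differentiable logit map, let y ∈ {−1,+1}^N, and let w : [0,∞) → ℝ^P be a differentiable parameter trajectory with logits s_t = f(w_t). Suppose that for every t the Jacobian J_t = Df(w_t) ∈ ℝ^{N×P} has full rank N, and that w follows natural gradient flow on the logistic loss, i.e. J_tᵀ F(s_t) J_t ẇ_t = −J_tᵀ ∇L(s_t) for all t ≥ 0, where ∇L(s)_n = −y_n(1−φ(y_n s_n)) and F(s) = diag(φ(s_n)(1−φ(s_n)))_{n=1..N}. Then s_t grows asymptotically linearly with direction vector y: for every n, (s_t)_n / t → y_n as t → ∞. -/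

import Mathlib

/-!
Pairing the flow equation with tangent vectors and using that the derivative of the logit map is
surjective turns it into `F(s) ṡ = -∇L(s)`. As `F` is diagonal, the coordinates decouple, and each
margin `u = yₙ sₙ` solves `u' = 1 + exp (-u)`, no matter what the parametrization is. This says
`(exp u + 1)' = exp u + 1`, so `exp u + 1` is a multiple of `exp t`: the margin has the asymptote
`t + const`.
-/

open Matrix Set Filter

/-- The logistic sigmoid `φ(u) = 1/(1+exp(-u))`. -/
noncomputable def phi (u : ℝ) : ℝ := 1 / (1 + Real.exp (-u))

/-- Gradient of the logistic loss with respect to the logits: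
`∇L(s)_n = -y_n (1 - φ(y_n s_n))`. -/
noncomputable def gradLs {N : ℕ} (y s : Fin N → ℝ) : Fin N → ℝ :=
  fun n => -(y n * (1 - phi (y n * s n)))

/-- Fisher information matrix of the logits: `F(s) = diag(φ(s_n)(1-φ(s_n)))`. -/
noncomputable def fisherS {N : ℕ} (s : Fin N → ℝ) : Matrix (Fin N) (Fin N) ℝ :=
  Matrix.diagonal fun n => phi (s n) * (1 - phi (s n))

theorem eq_exp_smul_of_hasDerivWithinAt_Ici {E : Type*} [NormedAddCommGroup E] [NormedSpace ℝ E]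
    {z : ℝ → E} {a c t : ℝ}
    (hz : ∀ x ∈ Ici a, HasDerivWithinAt z (c • z x) (Ici a) x) (ht : t ∈ Ici a) :
    z t = Real.exp (c * (t - a)) • z a := by
  have hderiv : ∀ x ∈ Ici a,
      HasDerivWithinAt (fun x => Real.exp (-(c * (x - a))) • z x) 0 (Ici a) x := fun x hx => by
    have hexp : HasDerivAt (fun x => Real.exp (-(c * (x - a))))
        (Real.exp (-(c * (x - a))) * -(c * 1)) x :=
      (((hasDerivAt_id x).sub_const a).const_mul c).neg.exp
    exact (hexp.hasDerivWithinAt.smul (hz x hx)).congr_deriv (by module)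
  have hconst : Real.exp (-(c * (t - a))) • z t = z a := by
    simpa using constant_of_has_deriv_right_zero
      (fun x hx => (hderiv x hx.1).continuousWithinAt.mono Icc_subset_Ici_self)
      (fun x hx => (hderiv x hx.1).mono (Ici_subset_Ici.2 hx.1)) t ⟨ht, le_rfl⟩
  rw [← hconst, smul_smul, ← Real.exp_add, add_neg_cancel, Real.exp_zero, one_smul]

theorem tendsto_div_id_of_tendsto_sub_mul {g : ℝ → ℝ} {c l : ℝ}
    (h : Tendsto (fun t => g t - c * t) atTop (nhds l)) :
    Tendsto (fun t => g t / t) atTop (nhds c) := by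
  have hlim : Tendsto (fun t => (g t - c * t) / t + c) atTop (nhds c) := by
    simpa using (h.div_atTop tendsto_id).add_const c
  refine hlim.congr' ?_
  filter_upwards [eventually_ne_atTop 0] with t ht
  field_simp
  ring

section Margin

variable {u : ℝ → ℝ} {a : ℝ}

theorem exp_add_one_eq_of_deriv_eq_one_add_exp_neg {t : ℝ}
    (hu : ∀ x ∈ Ici a, HasDerivWithinAt u (1 + Real.exp (-u x)) (Ici a) x) (ht : t ∈ Ici a) :
    Real.exp (u t) + 1 = Real.exp (t - a) * (Real.exp (u a) + 1) := by
  have hz : ∀ x ∈ Ici a, HasDerivWithinAt (fun x => Real.exp (u x) + 1)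
      ((1 : ℝ) • (Real.exp (u x) + 1)) (Ici a) x := fun x hx =>
    ((hu x hx).exp.add_const 1).congr_deriv <| by
      rw [mul_add, ← Real.exp_add, add_neg_cancel, Real.exp_zero, mul_one, one_smul]
  simpa using eq_exp_smul_of_hasDerivWithinAt_Ici hz ht

theorem tendsto_sub_id_of_deriv_eq_one_add_exp_neg
    (hu : ∀ x ∈ Ici a, HasDerivWithinAt u (1 + Real.exp (-u x)) (Ici a) x) :
    Tendsto (fun t => u t - t) atTop (nhds (Real.log (Real.exp (u a) + 1) - a)) := by
  have hlim : Tendsto (fun t => Real.exp (-a) * (Real.exp (u a) + 1) - Real.exp (-t)) atTop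
      (nhds (Real.exp (-a) * (Real.exp (u a) + 1))) := by
    simpa using Real.tendsto_exp_neg_atTop_nhds_zero.const_sub
      (Real.exp (-a) * (Real.exp (u a) + 1))
  have hexp : ∀ᶠ t in atTop, Real.exp (-a) * (Real.exp (u a) + 1) - Real.exp (-t) =
      Real.exp (u t - t) := by
    filter_upwards [eventually_ge_atTop a] with t ht
    calc Real.exp (-a) * (Real.exp (u a) + 1) - Real.exp (-t)
        = Real.exp (-t) * (Real.exp (t - a) * (Real.exp (u a) + 1) - 1) := by
          rw [mul_sub, mul_one, ← mul_assoc, ← Real.exp_add]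
          ring_nf
      _ = Real.exp (-t) * Real.exp (u t) := by
          rw [← exp_add_one_eq_of_deriv_eq_one_add_exp_neg hu ht, add_sub_cancel_right]
      _ = Real.exp (u t - t) := by rw [← Real.exp_add, neg_add_eq_sub]
  have hvalue : Real.log (Real.exp (-a) * (Real.exp (u a) + 1)) =
      Real.log (Real.exp (u a) + 1) - a := by
    rw [Real.log_mul (by positivity) (by positivity), Real.log_exp, neg_add_eq_sub]
  rw [← hvalue]
  exact ((hlim.congr' hexp).log (by positivity)).congr fun t => Real.log_exp _

end Margin

theorem phi_eq_sigmoid (u : ℝ) : phi u = Real.sigmoid u :=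
  one_div _

theorem phi_neg (u : ℝ) : phi (-u) = 1 - phi u := by
  simp only [phi_eq_sigmoid, Real.sigmoid_neg]

theorem one_sub_phi_ne_zero (u : ℝ) : 1 - phi u ≠ 0 := by
  rw [phi_eq_sigmoid]
  exact (sub_pos.2 (Real.sigmoid_lt_one u)).ne'

theorem eq_one_add_exp_neg_of_phi_mul_eq_one {u v : ℝ} (h : phi u * v = 1) :
    v = 1 + Real.exp (-u) := by
  rw [eq_inv_of_mul_eq_one_right h, phi, one_div, inv_inv]

theorem phi_mul_one_sub_phi_sign_mul {y : ℝ} (hy : y = 1 ∨ y = -1) (s : ℝ) :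
    phi (y * s) * (1 - phi (y * s)) = phi s * (1 - phi s) := by
  rcases hy with rfl | rfl
  · rw [one_mul]
  · rw [neg_one_mul, phi_neg, sub_sub_cancel, mul_comm]

section LogitFlow

variable {N : ℕ} {y : Fin N → ℝ}

theorem margin_velocity_of_fisherS_mulVec_eq {s v : Fin N → ℝ} {n : Fin N}
    (hy : y n = 1 ∨ y n = -1) (h : fisherS s *ᵥ v = -gradLs y s) :
    y n * v n = 1 + Real.exp (-(y n * s n)) := by
  have hyy : y n * y n = 1 := mul_self_eq_one_iff.2 hy
  have hcoord : phi (s n) * (1 - phi (s n)) * v n = y n * (1 - phi (y n * s n)) := by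
    simpa [fisherS, gradLs, mulVec_diagonal] using congrFun h n
  rw [← phi_mul_one_sub_phi_sign_mul hy] at hcoord
  refine eq_one_add_exp_neg_of_phi_mul_eq_one
    (mul_right_cancel₀ (one_sub_phi_ne_zero (y n * s n)) ?_)
  linear_combination y n * hcoord + (1 - phi (y n * s n)) * hyy

theorem tendsto_logit_sub_mul_of_fisherS_mulVec_deriv_eq {s s' : ℝ → Fin N → ℝ} {a : ℝ} {n : Fin N}
    (hy : y n = 1 ∨ y n = -1)
    (hs : ∀ t ∈ Ici a, HasDerivWithinAt s (s' t) (Ici a) t)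
    (hflow : ∀ t ∈ Ici a, fisherS (s t) *ᵥ s' t = -gradLs y (s t)) :
    Tendsto (fun t => s t n - y n * t) atTop
      (nhds (y n * (Real.log (Real.exp (y n * s a n) + 1) - a))) := by
  have hyy : y n * y n = 1 := mul_self_eq_one_iff.2 hy
  have hmargin : ∀ t ∈ Ici a, HasDerivWithinAt (fun t => y n * s t n)
      (1 + Real.exp (-(y n * s t n))) (Ici a) t := fun t ht =>
    ((hasDerivWithinAt_pi.1 (hs t ht) n).const_mul (y n)).congr_deriv
      (margin_velocity_of_fisherS_mulVec_eq hy (hflow t ht))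
  refine ((tendsto_sub_id_of_deriv_eq_one_add_exp_neg hmargin).const_mul (y n)).congr fun t => ?_
  linear_combination s t n * hyy

end LogitFlow

section Pullback

variable {m n : Type*} [Fintype m] [Fintype n]

theorem eq_of_forall_dotProduct_apply_eq {R V : Type*} [Semiring R] {g h : n → R}
    {φ : V → n → R} (hφ : Function.Surjective φ) (hgh : ∀ v, g ⬝ᵥ φ v = h ⬝ᵥ φ v) : g = h :=
  dotProduct_eq g h (hφ.forall.2 hgh)

theorem mulVec_surjective_of_rank_eq_card {K : Type*} [Field K] {A : Matrix m n K}
    (hA : A.rank = Fintype.card m) : Function.Surjective A.mulVec :=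
  LinearMap.range_eq_top.1 <| Submodule.eq_top_of_finrank_eq (S := LinearMap.range A.mulVecLin) <|
    hA.trans (Module.finrank_fintype_fun_eq_card K).symm

theorem mulVec_dotProduct_mulVec_of_pullback_mulVec_eq {R : Type*} [CommRing R]
    {J : Matrix m n R} {F : Matrix m m R} {d : n → R} {g : m → R}
    (h : (Jᵀ * F * J) *ᵥ d = -(Jᵀ *ᵥ g)) (v : n → R) :
    (F *ᵥ (J *ᵥ d)) ⬝ᵥ (J *ᵥ v) = -g ⬝ᵥ (J *ᵥ v) := by
  have h_pullback : Jᵀ *ᵥ (F *ᵥ (J *ᵥ d)) = Jᵀ *ᵥ -g := by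
    rw [mulVec_mulVec, mulVec_mulVec, h, mulVec_neg]
  rw [dotProduct_mulVec, dotProduct_mulVec, ← mulVec_transpose, ← mulVec_transpose, h_pullback]

end Pullback

/-- Parameters may range over any normed space, so the flow equation `Jᵀ F J ẇ = -Jᵀ ∇L` is
expressed by pairing it with every tangent vector `v`. -/
theorem ngf_logits_asymptotically_linear_nonlinear_general {E : Type*} [NormedAddCommGroup E]
    [NormedSpace ℝ E] {N : ℕ} {f : E → Fin N → ℝ} {y : Fin N → ℝ}
    (hy : ∀ n, y n = 1 ∨ y n = -1) {a : ℝ} {w w' : ℝ → E} {f' : ℝ → E →L[ℝ] Fin N → ℝ}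
    (hw : ∀ t ∈ Ici a, HasDerivWithinAt w (w' t) (Ici a) t)
    (hf : ∀ t ∈ Ici a, HasFDerivAt f (f' t) (w t))
    (hsurj : ∀ t ∈ Ici a, Function.Surjective (f' t))
    (hflow : ∀ t ∈ Ici a, ∀ v,
      (fisherS (f (w t)) *ᵥ f' t (w' t)) ⬝ᵥ f' t v = -gradLs y (f (w t)) ⬝ᵥ f' t v) (n : Fin N) :
    Tendsto (fun t => f (w t) n - y n * t) atTop
      (nhds (y n * (Real.log (Real.exp (y n * f (w a) n) + 1) - a))) :=
  tendsto_logit_sub_mul_of_fisherS_mulVec_deriv_eq (hy n)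
    (fun t ht => (hf t ht).comp_hasDerivWithinAt t (hw t ht))
    (fun t ht => eq_of_forall_dotProduct_apply_eq (hsurj t ht) (hflow t ht))

/-- **Theorem 4**: for an overparametrized (`P ≥ N`) differentiable classifier with
full-rank Jacobian following natural gradient flow on the logistic loss, the logits
`s_t = f(w_t)` grow asymptotically linearly with direction vector `y`. -/
theorem ngf_logits_asymptotically_linear_nonlinear {N P : ℕ} (hNP : N ≤ P)
    (f : (Fin P → ℝ) → (Fin N → ℝ))
    (y : Fin N → ℝ) (hy : ∀ n, y n = 1 ∨ y n = -1)
    (w dw : ℝ → Fin P → ℝ) (J : ℝ → Matrix (Fin N) (Fin P) ℝ)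
    (hwdiff : ∀ t ∈ Ici (0:ℝ), HasDerivWithinAt w (dw t) (Ici 0) t)
    (hJ : ∀ t ∈ Ici (0:ℝ),
      HasFDerivAt f ((J t).mulVecLin.toContinuousLinearMap) (w t))
    (hrank : ∀ t ∈ Ici (0:ℝ), (J t).rank = N)
    (hflow : ∀ t ∈ Ici (0:ℝ),
      ((J t)ᵀ * fisherS (f (w t)) * J t) *ᵥ dw t = -((J t)ᵀ *ᵥ gradLs y (f (w t)))) :
    ∀ n, Tendsto (fun t => f (w t) n / t) atTop (nhds (y n)) := by
  intro n
  refine tendsto_div_id_of_tendsto_sub_mul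
    (ngf_logits_asymptotically_linear_nonlinear_general hy hwdiff hJ ?_ ?_ n)
  · exact fun t ht => mulVec_surjective_of_rank_eq_card (by rw [hrank t ht, Fintype.card_fin])
  · exact fun t ht => mulVec_dotProduct_mulVec_of_pullback_mulVec_eq (hflow t ht)
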